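/- (Lemma 5.3, concentration of the truncated variance estimator.) For every bandwidth h = (h_1,…,h_d) with h_i > 0, every t ∈ ℝ^d and every η ≥ 0: P^{⊗n}( | σ̃²_{t,trunc}(h) / σ²_{t,trunc}(h) − 1 | ≥ η ) ≤ 2 exp( − 3η² log²n / ( 2(3+2η) ‖K‖_sup² ) ). -/

import Mathlib

open MeasureTheory Real
open scoped ENNReal BigOperators

noncomputable section

/-- `Vec d` is `ℝ^d` (with the product structure, used for anisotropic statements). -/
abbrev Vec (d : ℕ) := Fin d → ℝ

/-- Samples of size `n` from `ℝ^d`. -/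
abbrev Sample (d n : ℕ) := Fin n → Vec d

/-- The largest integer strictly smaller than `b` (for `b > 0`), i.e. `⌊b⌋` in the paper's
anisotropic Hölder class notation. -/
def hfl (b : ℝ) : ℕ := ⌈b⌉₊ - 1

/-- One-dimensional Taylor polynomial of `f` at `y'` of degree `l`, evaluated at `y`. -/
def taylorPoly (f : ℝ → ℝ) (l : ℕ) (y' y : ℝ) : ℝ :=
  ∑ k ∈ Finset.range (l + 1), iteratedDeriv k f y' / (Nat.factorial k : ℝ) * (y - y') ^ k

/-- The slice of `f : ℝ^d → ℝ` along coordinate `i` through the point `x`. -/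
def sliceFun {d : ℕ} (f : Vec d → ℝ) (i : Fin d) (x : Vec d) : ℝ → ℝ :=
  fun y => f (Function.update x i y)

/-- Anisotropic Hölder condition with exponents `β = (β_1, …, β_d)` and constant `L`:
in each coordinate `i`, the slices admit derivatives up to order `⌊β i⌋` (the largest
integer strictly less than `β i`) and the Taylor remainder of degree `⌊β i⌋` is bounded
by `L |y - y'| ^ (β i)`, uniformly in the remaining coordinates. For `β i ≤ 1` this is
the usual coordinatewise Hölder condition. -/
def HolderAniso (d : ℕ) (β : Vec d) (L : ℝ) (f : Vec d → ℝ) : Prop :=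
  ∀ i : Fin d,
    (∀ x : Vec d, ContDiff ℝ (hfl (β i)) (sliceFun f i x)) ∧
    ∀ (x : Vec d) (y y' : ℝ),
      |sliceFun f i x y - taylorPoly (sliceFun f i x) (hfl (β i)) y' y| ≤ L * |y - y'| ^ (β i)

/-- `p` is a probability density on `ℝ^d` (w.r.t. Lebesgue measure). -/
def IsProbDensity (d : ℕ) (p : Vec d → ℝ) : Prop :=
  Measurable p ∧ (∀ x, 0 ≤ p x) ∧ ∫ x, p x = 1

/-- The class `𝒫_d(β, L)` of anisotropic Hölder-smooth probability densities. -/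
def Pclass (d : ℕ) (β : Vec d) (L : ℝ) (p : Vec d → ℝ) : Prop :=
  IsProbDensity d p ∧ HolderAniso d β L p

/-- The unnormalized harmonic mean `β̄ = (∑ 1/β_i)⁻¹`. -/
def betaBar {d : ℕ} (β : Vec d) : ℝ := (∑ i, (β i)⁻¹)⁻¹

/-- `c₁(β, L) = sup { ‖p‖_∞ : p ∈ 𝒫_d(β, L) }`. -/
def c1const (d : ℕ) (β : Vec d) (L : ℝ) : ℝ :=
  sSup {c | ∃ p x, Pclass d β L p ∧ c = p x}

/-- The measure on `ℝ^d` with Lebesgue density `p`. -/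
def pdfMeasure (d : ℕ) (p : Vec d → ℝ) : Measure (Vec d) :=
  volume.withDensity fun x => ENNReal.ofReal (p x)

/-- The joint law `P^{⊗n}` of an i.i.d. sample of size `n` from the density `p`. -/
def jointMeasure (d n : ℕ) (p : Vec d → ℝ) : Measure (Sample d n) :=
  Measure.pi fun _ => pdfMeasure d p

/-- The `p`-dependent rate `ψ^n_{x,β} = min{ x, (x/n)^{β̄/(2β̄+1)} }` (with `bb = β̄`). -/
def psiRate (n : ℕ) (bb x : ℝ) : ℝ := min x ((x / n) ^ (bb / (2 * bb + 1)))

end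

noncomputable section

/-- `K` is a product kernel `K(x) = ∏ K_i(x_i)` whose factors are nonnegative, symmetric,
supported on `[-1,1]`, continuous on their support, integrate to one and are positive at `0`. -/
def IsProductKernel (d : ℕ) (K : Vec d → ℝ) : Prop :=
  ∃ Ki : Fin d → (ℝ → ℝ),
    (∀ x, K x = ∏ i, Ki i (x i)) ∧
    ∀ i : Fin d,
      (∀ y, 0 ≤ Ki i y) ∧ (∀ y, Ki i (-y) = Ki i y) ∧
      (∀ y, y ∉ Set.Icc (-1 : ℝ) 1 → Ki i y = 0) ∧
      ContinuousOn (Ki i) (Set.Icc (-1) 1) ∧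
      (∫ y, Ki i y = 1) ∧ 0 < Ki i 0

/-- The rescaled kernel `K_h(x) = (∏ h_i)⁻¹ K(x_1/h_1, …, x_d/h_d)`. -/
def scaledKernel (d : ℕ) (K : Vec d → ℝ) (h : Vec d) (x : Vec d) : ℝ :=
  (∏ i, h i)⁻¹ * K (fun i => x i / h i)

/-- The kernel density estimator `p̂_{n,h}(t) = n⁻¹ ∑_i K_h(t - X_i)`. -/
def kde (d n : ℕ) (K : Vec d → ℝ) (h : Vec d) (X : Sample d n) (t : Vec d) : ℝ :=
  (n : ℝ)⁻¹ * ∑ i, scaledKernel d K h (fun j => t j - X i j)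

/-- `‖K‖_sup`. -/
def KsupNorm (d : ℕ) (K : Vec d → ℝ) : ℝ := ⨆ x, |K x|

/-- `‖K‖₂² = ∫ K² dλ^d`. -/
def K2sq (d : ℕ) (K : Vec d → ℝ) : ℝ := ∫ x, (K x) ^ 2

/-- The exact variance proxy `σ_t²(h) = n⁻¹ ((K_h)² ∗ p)(t)`. -/
def sigmaSq (d n : ℕ) (K : Vec d → ℝ) (p : Vec d → ℝ) (h : Vec d) (t : Vec d) : ℝ :=
  (n : ℝ)⁻¹ * ∫ y, (scaledKernel d K h (fun i => t i - y i)) ^ 2 * p y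

/-- The truncation level `log²n / (n² ∏ h_i²)`. -/
def truncLevel (d n : ℕ) (h : Vec d) : ℝ :=
  (Real.log n) ^ 2 / ((n : ℝ) ^ 2 * (∏ i, h i) ^ 2)

/-- `σ²_{t,trunc}(h) = max{ log²n/(n² ∏ h_i²), σ_t²(h) }`. -/
def sigmaSqTrunc (d n : ℕ) (K : Vec d → ℝ) (p : Vec d → ℝ) (h : Vec d) (t : Vec d) : ℝ :=
  max (truncLevel d n h) (sigmaSq d n K p h t)

/-- The empirical variance `σ̃_t²(h) = (n² ∏ h_i²)⁻¹ ∑_i K²((t - X_i)/h)`. -/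
def sigmaTildeSq (d n : ℕ) (K : Vec d → ℝ) (h : Vec d) (X : Sample d n) (t : Vec d) : ℝ :=
  ((n : ℝ) ^ 2 * (∏ i, h i) ^ 2)⁻¹ * ∑ i, (K (fun j => (t j - X i j) / h j)) ^ 2

/-- `σ̃²_{t,trunc}(h) = max{ log²n/(n² ∏ h_i²), σ̃_t²(h) }`. -/
def sigmaTildeSqTrunc (d n : ℕ) (K : Vec d → ℝ) (h : Vec d) (X : Sample d n) (t : Vec d) : ℝ :=
  max (truncLevel d n h) (sigmaTildeSq d n K h X t)

/-- Membership of the multi-index `j` in the dyadic grid `𝒥`, i.e. `∑ j_i ≤ ⌊log₂(n/log²n)⌋`. -/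
def gridOK (d n : ℕ) (j : Fin d → ℕ) : Prop :=
  ((∑ i, j i : ℕ) : ℝ) ≤ Real.logb 2 ((n : ℝ) / (Real.log n) ^ 2)

/-- The bandwidth `(2^{-j_1}, …, 2^{-j_d})` associated with a multi-index `j`. -/
def bwOf (d : ℕ) (j : Fin d → ℕ) : Vec d := fun i => (2 : ℝ) ^ (-(j i : ℝ))

/-- The bias upper bound `B_t(h) = L ∑_i c_{9,i}(β) h_i^{β_i}`,
with `c_{9,i}(β) = ∫ |x_i|^{β_i} |K(x)| dλ^d(x)`. -/
def biasBound (d : ℕ) (K : Vec d → ℝ) (β : Vec d) (L : ℝ) (h : Vec d) : ℝ :=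
  L * ∑ i, (∫ x : Vec d, |x i| ^ (β i) * |K x|) * h i ^ (β i)

/-- The bias `b_t(h) = p(t) - (K_h ∗ p)(t)`. -/
def biasAt (d : ℕ) (K : Vec d → ℝ) (p : Vec d → ℝ) (h : Vec d) (t : Vec d) : ℝ :=
  p t - ∫ y, scaledKernel d K h (fun i => t i - y i) * p y

end

/-- A Bernstein-type lower bound on Bennett's exponent. -/
theorem sq_div_le_one_add_mul_log_sub {x : ℝ} (hx : 0 ≤ x) :
    3 * x ^ 2 / (2 * (3 + 2 * x)) ≤ (1 + x) * Real.log (1 + x) - x := by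
  have hlog := Real.le_log_one_add_of_nonneg hx
  have hmul : (1 + x) * (2 * x / (x + 2)) ≤ (1 + x) * Real.log (1 + x) :=
    mul_le_mul_of_nonneg_left hlog (by positivity)
  have heq : (1 + x) * (2 * x / (x + 2)) - x = x ^ 2 / (x + 2) := by
    field_simp
    ring
  have hle : 3 * x ^ 2 / (2 * (3 + 2 * x)) ≤ x ^ 2 / (x + 2) := by
    rw [div_le_div_iff₀ (by positivity) (by positivity)]
    nlinarith [pow_nonneg hx 3]
  linarith

theorem exp_neg_le_quadratic {s : ℝ} (hs : 0 ≤ s) : Real.exp (-s) ≤ 1 - s + s ^ 2 / 2 := by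
  have hq := Real.quadratic_le_exp_of_nonneg hs
  rw [Real.exp_neg]
  refine (inv_anti₀ (by positivity) hq).trans ?_
  rw [inv_le_iff_one_le_mul₀ (by positivity)]
  nlinarith [sq_nonneg (s ^ 2)]

section Chernoff

variable {E : Type*} [MeasurableSpace E]

/-- The moment generating function of a `[0,1]`-valued variable is dominated by that of the
Poisson law with the same mean. -/
theorem integral_exp_mul_le_of_mem_Icc (μ : Measure E) [IsProbabilityMeasure μ] {f : E → ℝ}
    (hf : Measurable f) (hf01 : ∀ x, f x ∈ Set.Icc (0 : ℝ) 1) (l : ℝ) :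
    ∫ x, Real.exp (l * f x) ∂μ ≤ Real.exp ((∫ x, f x ∂μ) * (Real.exp l - 1)) := by
  have hint : Integrable f μ := Integrable.of_mem_Icc 0 1 hf.aemeasurable (ae_of_all _ hf01)
  have hconv (x : E) : Real.exp (l * f x) ≤ 1 + f x * (Real.exp l - 1) := by
    have h01 := hf01 x
    have := convexOn_exp.2 (Set.mem_univ (0 : ℝ)) (Set.mem_univ l)
      (sub_nonneg.2 h01.2) h01.1 (by ring)
    simp only [smul_eq_mul, mul_zero, zero_add, Real.exp_zero, mul_one] at this
    rw [mul_comm l]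
    linarith
  calc ∫ x, Real.exp (l * f x) ∂μ ≤ ∫ x, (1 + f x * (Real.exp l - 1)) ∂μ := by
        refine integral_mono_of_nonneg (ae_of_all _ fun x => (Real.exp_pos _).le) ?_
          (ae_of_all _ hconv)
        exact (integrable_const _).add (hint.mul_const _)
    _ = (∫ x, f x ∂μ) * (Real.exp l - 1) + 1 := by
        rw [integral_add (integrable_const _) (hint.mul_const _), integral_mul_const]
        simp [add_comm]
    _ ≤ _ := Real.add_one_le_exp _

/-- Chernoff bound for a sum of i.i.d. `[0,1]`-valued variables. -/
theorem pi_measure_sum_ge_le (μ : Measure E) [IsProbabilityMeasure μ] {f : E → ℝ}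
    (hf : Measurable f) (hf01 : ∀ x, f x ∈ Set.Icc (0 : ℝ) 1) (n : ℕ) (l a : ℝ) :
    (Measure.pi fun _ : Fin n => μ) {X | a ≤ l * ∑ i, f (X i)} ≤
      ENNReal.ofReal (Real.exp (n * (∫ x, f x ∂μ) * (Real.exp l - 1) - a)) := by
  set ν := Measure.pi fun _ : Fin n => μ
  have hmeas : Measurable fun X : Fin n → E => ∑ i, f (X i) := by fun_prop
  have hint : Integrable (fun X : Fin n → E => Real.exp (1 * (l * ∑ i, f (X i)))) ν := by
    refine Integrable.of_bound (Measurable.aestronglyMeasurable (by fun_prop))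
      (Real.exp (|l| * n)) (ae_of_all _ fun X => ?_)
    rw [Real.norm_eq_abs, abs_of_pos (Real.exp_pos _), Real.exp_le_exp, one_mul]
    have h0 : 0 ≤ ∑ i, f (X i) := Finset.sum_nonneg fun i _ => (hf01 _).1
    have h1 : ∑ i, f (X i) ≤ n := by
      simpa using Finset.sum_le_card_nsmul Finset.univ (fun i => f (X i)) 1
        fun i _ => (hf01 _).2
    exact mul_le_mul (le_abs_self l) h1 h0 (abs_nonneg l)
  have hchernoff := ProbabilityTheory.measure_ge_le_exp_mul_mgf (μ := ν)
    (X := fun X : Fin n → E => l * ∑ i, f (X i)) a zero_le_one hint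
  have hmgf : ProbabilityTheory.mgf (fun X : Fin n → E => l * ∑ i, f (X i)) ν 1 ≤
      Real.exp (n * (∫ x, f x ∂μ) * (Real.exp l - 1)) := by
    simp only [ProbabilityTheory.mgf, one_mul, Finset.mul_sum, Real.exp_sum]
    rw [integral_fintype_prod_eq_prod (fun _ x => Real.exp (l * f x))]
    simp only [Finset.prod_const, Finset.card_univ, Fintype.card_fin]
    rw [mul_assoc, Real.exp_nat_mul]
    exact pow_le_pow_left₀ (integral_nonneg fun x => (Real.exp_pos _).le)
      (integral_exp_mul_le_of_mem_Icc μ hf hf01 l) n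
  rw [← ENNReal.ofReal_toReal (measure_ne_top ν _)]
  refine ENNReal.ofReal_le_ofReal (hchernoff.trans ?_)
  rw [sub_eq_neg_add, Real.exp_add, neg_one_mul]
  exact mul_le_mul_of_nonneg_left hmgf (Real.exp_pos _).le

/-- Two-sided relative deviation bound for a sum of i.i.d. `[0,1]`-valued variables, at the scale
of any upper bound `w` on its mean. -/
theorem pi_measure_abs_sum_sub_ge_le (μ : Measure E) [IsProbabilityMeasure μ] {f : E → ℝ}
    (hf : Measurable f) (hf01 : ∀ x, f x ∈ Set.Icc (0 : ℝ) 1) (n : ℕ) {η w : ℝ} (hη : 0 ≤ η)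
    (hw : n * ∫ x, f x ∂μ ≤ w) :
    (Measure.pi fun _ : Fin n => μ) {X | η * w ≤ |∑ i, f (X i) - n * ∫ x, f x ∂μ|} ≤
      ENNReal.ofReal (2 * Real.exp (-(w * (3 * η ^ 2 / (2 * (3 + 2 * η)))))) := by
  set v := n * ∫ x, f x ∂μ with hv
  have hv0 : 0 ≤ v := mul_nonneg n.cast_nonneg (integral_nonneg fun x => (hf01 x).1)
  have hw0 : 0 ≤ w := hv0.trans hw
  have hsub : {X : Fin n → E | η * w ≤ |∑ i, f (X i) - v|} ⊆
      {X | Real.log (1 + η) * (v + η * w) ≤ Real.log (1 + η) * ∑ i, f (X i)} ∪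
      {X | -η * (v - η * w) ≤ -η * ∑ i, f (X i)} := by
    intro X hX
    rcases le_abs'.1 (show η * w ≤ |∑ i, f (X i) - v| from hX) with h | h
    · right
      show -η * (v - η * w) ≤ -η * ∑ i, f (X i)
      exact mul_le_mul_of_nonpos_left (by linarith) (by linarith)
    · left
      exact mul_le_mul_of_nonneg_left (by linarith) (Real.log_nonneg (by linarith))
  refine (measure_mono hsub).trans ((measure_union_le _ _).trans ?_)
  rw [two_mul, ENNReal.ofReal_add (Real.exp_pos _).le (Real.exp_pos _).le]
  refine add_le_add ((pi_measure_sum_ge_le μ hf hf01 n _ _).trans ?_)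
    ((pi_measure_sum_ge_le μ hf hf01 n _ _).trans ?_)
  all_goals
    refine ENNReal.ofReal_le_ofReal (Real.exp_le_exp.2 ?_)
    rw [← hv]
  · rw [Real.exp_log (by linarith)]
    have hlog : Real.log (1 + η) ≤ η := by
      linarith [Real.log_le_sub_one_of_pos (show 0 < 1 + η by linarith)]
    nlinarith [mul_le_mul_of_nonneg_left (sq_div_le_one_add_mul_log_sub hη) hw0,
      mul_nonneg (sub_nonneg.2 hw) (sub_nonneg.2 hlog)]
  · have hquad := exp_neg_le_quadratic hη
    have hlin := Real.add_one_le_exp (-η)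
    have hle : 3 * η ^ 2 / (2 * (3 + 2 * η)) ≤ η ^ 2 / 2 := by
      rw [div_le_div_iff₀ (by positivity) (by positivity)]
      nlinarith [pow_nonneg hη 3]
    nlinarith [mul_le_mul_of_nonneg_left hle hw0, mul_le_mul_of_nonneg_left hquad hw0,
      mul_nonneg (sub_nonneg.2 hw) (show 0 ≤ Real.exp (-η) - 1 + η by linarith)]

end Chernoff

section ProductKernel

variable {d : ℕ} {K : Vec d → ℝ}

theorem IsProductKernel.measurable (hK : IsProductKernel d K) : Measurable K := by
  obtain ⟨Ki, hprod, hKi⟩ := hK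
  have hmeas (i : Fin d) : Measurable (Ki i) := by
    obtain ⟨-, -, hzero, hcont, -⟩ := hKi i
    refine measurable_of_restrict_of_restrict_compl (s := Set.Icc (-1 : ℝ) 1) measurableSet_Icc
      hcont.domRestrict.measurable ?_
    have : (Set.Icc (-1 : ℝ) 1)ᶜ.domRestrict (Ki i) = fun _ => 0 :=
      funext fun y => hzero y y.2
    rw [this]
    exact measurable_const
  rw [funext hprod]
  fun_prop

theorem IsProductKernel.bddAbove_range_abs (hK : IsProductKernel d K) :
    BddAbove (Set.range fun x => |K x|) := by
  obtain ⟨Ki, hprod, hKi⟩ := hK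
  have hbdd (i : Fin d) : ∃ C, ∀ y, |Ki i y| ≤ C := by
    obtain ⟨-, -, hzero, hcont, -⟩ := hKi i
    obtain ⟨C, hC⟩ := isCompact_Icc.exists_bound_of_continuousOn hcont
    refine ⟨max C 0, fun y => ?_⟩
    by_cases hy : y ∈ Set.Icc (-1 : ℝ) 1
    · exact (hC y hy).trans (le_max_left _ _)
    · simp [hzero y hy]
  choose C hC using hbdd
  refine ⟨∏ i, C i, ?_⟩
  rintro _ ⟨x, rfl⟩
  simp only [hprod, Finset.abs_prod]
  exact Finset.prod_le_prod (fun i _ => abs_nonneg _) fun i _ => hC i _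

theorem IsProductKernel.abs_le_KsupNorm (hK : IsProductKernel d K) (x : Vec d) :
    |K x| ≤ KsupNorm d K :=
  le_ciSup hK.bddAbove_range_abs x

theorem IsProductKernel.KsupNorm_pos (hK : IsProductKernel d K) : 0 < KsupNorm d K := by
  refine lt_of_lt_of_le ?_ (hK.abs_le_KsupNorm 0)
  obtain ⟨Ki, hprod, hKi⟩ := hK
  rw [hprod, abs_pos]
  exact Finset.prod_ne_zero_iff.2 fun i _ => (hKi i).2.2.2.2.2.ne'

end ProductKernel

theorem IsProbDensity.isProbabilityMeasure {d : ℕ} {p : Vec d → ℝ} (hp : IsProbDensity d p) :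
    IsProbabilityMeasure (pdfMeasure d p) := by
  obtain ⟨-, hnonneg, hone⟩ := hp
  have hint : Integrable p := by
    by_contra h
    rw [integral_undef h] at hone
    exact zero_ne_one hone
  constructor
  rw [pdfMeasure, withDensity_apply _ MeasurableSet.univ, Measure.restrict_univ,
    ← ofReal_integral_eq_lintegral_ofReal hint (ae_of_all _ hnonneg), hone, ENNReal.ofReal_one]

theorem IsProbDensity.integral_pdfMeasure {d : ℕ} {p : Vec d → ℝ} (hp : IsProbDensity d p)
    (g : Vec d → ℝ) : ∫ x, g x ∂pdfMeasure d p = ∫ x, g x * p x := by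
  rw [pdfMeasure, integral_withDensity_eq_integral_toReal_smul hp.1.ennreal_ofReal
    (ae_of_all _ fun _ => ENNReal.ofReal_lt_top)]
  simp only [ENNReal.toReal_ofReal (hp.2.1 _), smul_eq_mul, mul_comm]

/-- Up to the factor `M / (n² ∏ h_i²)`, the variance proxy is `n` times the mean of
`K²((t - X)/h) / M`. -/
theorem IsProbDensity.sigmaSq_eq {d n : ℕ} {K p : Vec d → ℝ} (hp : IsProbDensity d p)
    (hn : n ≠ 0) (h t : Vec d) {M : ℝ} (hM : M ≠ 0) :
    sigmaSq d n K p h t = M / ((n : ℝ) ^ 2 * (∏ i, h i) ^ 2) *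
      (n * ∫ x, K (fun j => (t j - x j) / h j) ^ 2 / M ∂pdfMeasure d p) := by
  rw [integral_div, hp.integral_pdfMeasure, sigmaSq]
  simp only [scaledKernel, mul_pow, mul_assoc, integral_const_mul]
  have hn' : (n : ℝ) ≠ 0 := Nat.cast_ne_zero.2 hn
  rw [inv_pow]
  field_simp

theorem sigmaTildeSq_eq {d n : ℕ} (K : Vec d → ℝ) (h t : Vec d) (X : Sample d n) {M : ℝ}
    (hM : M ≠ 0) :
    sigmaTildeSq d n K h X t = M / ((n : ℝ) ^ 2 * (∏ i, h i) ^ 2) *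
      ∑ i, K (fun j => (t j - X i j) / h j) ^ 2 / M := by
  rw [sigmaTildeSq, ← Finset.sum_div]
  field_simp

/-- Lemma 5.3, concentration of the truncated variance estimator.
For every bandwidth `h` with positive components, every `t` and every `η ≥ 0`:
`P^{⊗n}( |σ̃²_{t,trunc}(h)/σ²_{t,trunc}(h) - 1| ≥ η ) ≤ 2 exp(-3η² log²n / (2(3+2η)‖K‖_sup²))`. -/
theorem statement11 (d : ℕ) (hd : 1 ≤ d) (K : Vec d → ℝ) (hK : IsProductKernel d K)
    (p : Vec d → ℝ) (hp : IsProbDensity d p) (n : ℕ) (hn : 2 ≤ n)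
    (h : Vec d) (hh : ∀ i, 0 < h i) (t : Vec d) (η : ℝ) (hη : 0 ≤ η) :
    jointMeasure d n p
        {X | η ≤ |sigmaTildeSqTrunc d n K h X t / sigmaSqTrunc d n K p h t - 1|} ≤
      ENNReal.ofReal
        (2 * Real.exp (-(3 * η ^ 2 * (Real.log n) ^ 2) /
          (2 * (3 + 2 * η) * (KsupNorm d K) ^ 2))) := by
  have := hp.isProbabilityMeasure
  have hKpos := hK.KsupNorm_pos
  set M := KsupNorm d K ^ 2 with hMdef
  have hM : 0 < M := by positivity
  have hn0 : (0 : ℝ) < n := by positivity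
  have hprod : 0 < ∏ i, h i := Finset.prod_pos fun i _ => hh i
  have hlog : 0 < Real.log n := Real.log_pos (by exact_mod_cast hn)
  set f : Vec d → ℝ := fun x => K (fun j => (t j - x j) / h j) ^ 2 / M with hfdef
  have hf : Measurable f := by
    have := hK.measurable
    fun_prop
  have hf01 (x : Vec d) : f x ∈ Set.Icc (0 : ℝ) 1 := by
    refine ⟨by positivity, ?_⟩
    rw [hfdef, div_le_one hM, hMdef, ← sq_abs]
    exact pow_le_pow_left₀ (abs_nonneg _) (hK.abs_le_KsupNorm _) 2
  set c := M / ((n : ℝ) ^ 2 * (∏ i, h i) ^ 2) with hcdef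
  have hc : 0 < c := by positivity
  set v := n * ∫ x, f x ∂pdfMeasure d p
  have hlevel : truncLevel d n h = c * (Real.log n ^ 2 / M) := by
    rw [truncLevel, hcdef]
    field_simp
  have hsigma : sigmaSqTrunc d n K p h t = c * max (Real.log n ^ 2 / M) v := by
    rw [sigmaSqTrunc, hlevel, hp.sigmaSq_eq (by lia) h t hM.ne', mul_max_of_nonneg _ _ hc.le]
  have htilde (X : Sample d n) :
      sigmaTildeSqTrunc d n K h X t = c * max (Real.log n ^ 2 / M) (∑ i, f (X i)) := by
    rw [sigmaTildeSqTrunc, hlevel, sigmaTildeSq_eq K h t X hM.ne', mul_max_of_nonneg _ _ hc.le]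
  set w := max (Real.log n ^ 2 / M) v
  have hw : 0 < w := lt_max_of_lt_left (by positivity)
  have hsub : {X | η ≤ |sigmaTildeSqTrunc d n K h X t / sigmaSqTrunc d n K p h t - 1|} ⊆
      {X : Sample d n | η * w ≤ |∑ i, f (X i) - v|} := by
    intro X hX
    simp only [Set.mem_ofPred_eq, hsigma, htilde] at hX ⊢
    rw [mul_div_mul_left _ _ hc.ne', div_sub_one hw.ne', abs_div, abs_of_pos hw,
      le_div_iff₀ hw] at hX
    refine hX.trans ((abs_max_sub_max_le_max _ _ _ _).trans ?_)
    simp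
  refine (measure_mono hsub).trans
    ((pi_measure_abs_sum_sub_ge_le _ hf hf01 n hη (le_max_right _ _)).trans ?_)
  refine ENNReal.ofReal_le_ofReal
    (mul_le_mul_of_nonneg_left (Real.exp_le_exp.2 ?_) zero_le_two)
  rw [neg_div, neg_le_neg_iff]
  calc 3 * η ^ 2 * Real.log n ^ 2 / (2 * (3 + 2 * η) * M)
      = Real.log n ^ 2 / M * (3 * η ^ 2 / (2 * (3 + 2 * η))) := by
        field_simp
    _ ≤ w * (3 * η ^ 2 / (2 * (3 + 2 * η))) :=
        mul_le_mul_of_nonneg_right (le_max_left _ _) (by positivity)
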